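/- Let (ρ, m, E, B) be a solution of the monolithic-regularized ideal MHD system on ℝ^d × (0,∞) with ρ > 0, twice continuously differentiable in space and continuously differentiable in time, with ∇·B = 0. Let S : ℝ² → ℝ be twice continuously differentiable with the pressure satisfying the equation of state p·S_e(ρ,e) + ρ²·S_ρ(ρ,e) = 0 pointwise, where e := (E − ρ|u|²/2 − |B|²/2)/ρ and u := m/ρ. Set s(x,t) := S(ρ(x,t), e(x,t)). Then at every point, ρ(∂_t s + u·∇s) − ∇·(ρ ε ∇s) − ε∇ρ · ∇[(e·S_e − ρ·S_ρ)∘(ρ,e)] + ε∇(ρe) · ∇[S_e∘(ρ,e)] − ε ρ S_e(ρ,e) |∇u|² − ε S_e(ρ,e) |∇B|² = 0, where |∇u|² := Σ_{i,j}(∂_j u_i)² and |∇B|² := Σ_{i,j}(∂_j B_i)². -/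

import Mathlib

open scoped BigOperators

/-- Spatial partial derivative `∂_i f (x)` of a scalar field on `ℝ^d`. -/
noncomputable def spd {d : ℕ} (f : (Fin d → ℝ) → ℝ) (i : Fin d) (x : Fin d → ℝ) : ℝ :=
  fderiv ℝ f x (Pi.single i 1)

/-- Laplacian `Δf(x) = ∑ᵢ ∂ᵢ∂ᵢ f (x)` of a scalar field on `ℝ^d`. -/
noncomputable def slap {d : ℕ} (f : (Fin d → ℝ) → ℝ) (x : Fin d → ℝ) : ℝ :=
  ∑ i, spd (spd f i) i x

/-- The Maxwell stress tensor `𝒯 = B ⊗ B − (|B|²/2) I` built from a vector `B ∈ ℝ^d`. -/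
noncomputable def maxwellT {d : ℕ} (B : Fin d → ℝ) (i j : Fin d) : ℝ :=
  B i * B j - (if i = j then (∑ k, (B k) ^ 2) / 2 else 0)

/-- Specific internal energy `e = (E − ρ|u|²/2 − |B|²/2)/ρ` with `u = m/ρ`,
as a space-time field. -/
noncomputable def specE {d : ℕ} (ρ E : (Fin d → ℝ) → ℝ → ℝ)
    (m B : (Fin d → ℝ) → ℝ → Fin d → ℝ) (x : Fin d → ℝ) (t : ℝ) : ℝ :=
  (E x t - ρ x t * (∑ i, (m x t i / ρ x t) ^ 2) / 2 - (∑ i, (B x t i) ^ 2) / 2) / ρ x t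

/-- Partial derivative of `S(ρ,e)` in the first argument `ρ`. -/
noncomputable def Sd1 (S : ℝ × ℝ → ℝ) (q : ℝ × ℝ) : ℝ := fderiv ℝ S q (1, 0)

/-- Partial derivative of `S(ρ,e)` in the second argument `e`. -/
noncomputable def Sd2 (S : ℝ × ℝ → ℝ) (q : ℝ × ℝ) : ℝ := fderiv ℝ S q (0, 1)

/-!
Everything is expressed through the convection-diffusion operator `L f = ∂ₜf + ∇·(f u) − ε Δf`, in
which the four equations read `L ρ = 0`, `L (ρ uᵢ) = ∇·σᵢ`, `L E = ∇·(u·σ)` and `L Bᵢ = ∇·(uᵢ B)`,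
with `σ = 𝒯 − p I`. The product rule gives `L (ρ a²/2) = a L (ρ a) − (a²/2) L ρ − ε ρ |∇a|²`.
Summed over the components of `u` it is the kinetic energy balance; applied with the constant `1` in
place of `ρ` and the components of `B` in place of `a` it is the magnetic energy balance.
Subtracting both from the total energy leaves
`L (ρ e) = −p ∇·u + ε ρ |∇u|² + ε |∇B|²`. The Gibbs relation
`ρ ds = S_e d(ρ e) − (e S_e − ρ S_ρ) dρ`, applied to the material derivative and to the gradient of
`s`, then turns this into the entropy balance, where the equation of state cancels the `∇·u` terms.
-/

section SpatialCalculus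

variable {d : ℕ} {f g : (Fin d → ℝ) → ℝ} {x : Fin d → ℝ}

theorem spd_const (c : ℝ) (j : Fin d) (x : Fin d → ℝ) : spd (fun _ => c) j x = 0 := by
  simp [spd]

theorem spd_add (hf : DifferentiableAt ℝ f x) (hg : DifferentiableAt ℝ g x) (j : Fin d) :
    spd (fun y => f y + g y) j x = spd f j x + spd g j x := by
  simp [spd, fderiv_fun_add hf hg]

theorem spd_sub (hf : DifferentiableAt ℝ f x) (hg : DifferentiableAt ℝ g x) (j : Fin d) :
    spd (fun y => f y - g y) j x = spd f j x - spd g j x := by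
  simp [spd, fderiv_fun_sub hf hg]

theorem spd_mul (hf : DifferentiableAt ℝ f x) (hg : DifferentiableAt ℝ g x) (j : Fin d) :
    spd (fun y => f y * g y) j x = f x * spd g j x + g x * spd f j x := by
  simp [spd, fderiv_fun_mul hf hg]

theorem spd_const_mul (c : ℝ) (f : (Fin d → ℝ) → ℝ) (j : Fin d) (x : Fin d → ℝ) :
    spd (fun y => c * f y) j x = c * spd f j x := by
  change fderiv ℝ (c • f) x _ = _
  rw [fderiv_const_smul_field]
  rfl

theorem spd_sum {ι : Type*} {s : Finset ι} {F : ι → (Fin d → ℝ) → ℝ}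
    (hF : ∀ i ∈ s, DifferentiableAt ℝ (F i) x) (j : Fin d) :
    spd (fun y => ∑ i ∈ s, F i y) j x = ∑ i ∈ s, spd (F i) j x := by
  simp [spd, fderiv_fun_sum hF]

theorem differentiable_spd (hf : ContDiff ℝ 2 f) (j : Fin d) : Differentiable ℝ (spd f j) :=
  ((hf.fderiv_right (m := 1) (by norm_num)).clm_apply contDiff_const).differentiable one_ne_zero

theorem slap_const (c : ℝ) (x : Fin d → ℝ) : slap (fun _ => c) x = 0 := by
  have hgrad (j : Fin d) : spd (fun _ => c) j = fun _ => 0 := funext (spd_const c j)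
  simp [slap, hgrad, spd_const]

theorem slap_add (hf : ContDiff ℝ 2 f) (hg : ContDiff ℝ 2 g) (x : Fin d → ℝ) :
    slap (fun y => f y + g y) x = slap f x + slap g x := by
  have hgrad (j) : spd (fun y => f y + g y) j = fun y => spd f j y + spd g j y :=
    funext fun y =>
      spd_add (hf.differentiable two_ne_zero y) (hg.differentiable two_ne_zero y) j
  simp only [slap, hgrad, ← Finset.sum_add_distrib]
  exact Finset.sum_congr rfl fun j _ =>
    spd_add (differentiable_spd hf j x) (differentiable_spd hg j x) j

theorem sum_spd_mul_spd (hf : DifferentiableAt ℝ f x) (hg : ContDiff ℝ 2 g) :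
    ∑ j, spd (fun y => f y * spd g j y) j x = f x * slap g x + ∑ j, spd g j x * spd f j x := by
  simp only [slap, spd_mul hf (differentiable_spd hg _ x), Finset.mul_sum, Finset.sum_add_distrib]

theorem slap_mul (hf : ContDiff ℝ 2 f) (hg : ContDiff ℝ 2 g) (x : Fin d → ℝ) :
    slap (fun y => f y * g y) x
      = f x * slap g x + 2 * (∑ j, spd f j x * spd g j x) + g x * slap f x := by
  have df := hf.differentiable two_ne_zero
  have dg := hg.differentiable two_ne_zero
  have hgrad (j) : spd (fun y => f y * g y) j = fun y => f y * spd g j y + g y * spd f j y :=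
    funext fun y => spd_mul (df y) (dg y) j
  have hsplit : slap (fun y => f y * g y) x
      = ∑ j, spd (fun y => f y * spd g j y) j x + ∑ j, spd (fun y => g y * spd f j y) j x := by
    simp only [slap, hgrad, ← Finset.sum_add_distrib]
    exact Finset.sum_congr rfl fun j _ =>
      spd_add ((df x).fun_mul (differentiable_spd hg j x))
        ((dg x).fun_mul (differentiable_spd hf j x)) j
  rw [hsplit, sum_spd_mul_spd (df x) hg, sum_spd_mul_spd (dg x) hf]
  simp only [mul_comm (spd g _ x)]
  ring

/-- Divergence `∇·v` of a vector field on `ℝ^d`. -/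
noncomputable def sdiv (v : (Fin d → ℝ) → Fin d → ℝ) (x : Fin d → ℝ) : ℝ :=
  ∑ j, spd (fun y => v y j) j x

variable {v w : (Fin d → ℝ) → Fin d → ℝ}

theorem sdiv_add (hv : ∀ j, DifferentiableAt ℝ (fun y => v y j) x)
    (hw : ∀ j, DifferentiableAt ℝ (fun y => w y j) x) :
    sdiv (fun y j => v y j + w y j) x = sdiv v x + sdiv w x := by
  simp only [sdiv, spd_add (hv _) (hw _), Finset.sum_add_distrib]

theorem sdiv_sub (hv : ∀ j, DifferentiableAt ℝ (fun y => v y j) x)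
    (hw : ∀ j, DifferentiableAt ℝ (fun y => w y j) x) :
    sdiv (fun y j => v y j - w y j) x = sdiv v x - sdiv w x := by
  simp only [sdiv, spd_sub (hv _) (hw _), Finset.sum_sub_distrib]

theorem sdiv_mul (hf : DifferentiableAt ℝ f x) (hv : ∀ j, DifferentiableAt ℝ (fun y => v y j) x) :
    sdiv (fun y j => f y * v y j) x = f x * sdiv v x + ∑ j, v x j * spd f j x := by
  simp only [sdiv, spd_mul hf (hv _), Finset.sum_add_distrib, Finset.mul_sum]

theorem sdiv_sum_mul {ι : Type*} [Fintype ι] {a : (Fin d → ℝ) → ι → ℝ}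
    {σ : (Fin d → ℝ) → ι → Fin d → ℝ} (ha : ∀ i, DifferentiableAt ℝ (fun y => a y i) x)
    (hσ : ∀ i j, DifferentiableAt ℝ (fun y => σ y i j) x) :
    sdiv (fun y j => ∑ i, a y i * σ y i j) x
      = ∑ i, a x i * sdiv (fun y => σ y i) x
        + ∑ i, ∑ j, σ x i j * spd (fun y => a y i) j x := by
  calc sdiv (fun y j => ∑ i, a y i * σ y i j) x
      = ∑ i, sdiv (fun y j => a y i * σ y i j) x := by
        simp only [sdiv, spd_sum fun i _ => (ha i).fun_mul (hσ i _)]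
        exact Finset.sum_comm
    _ = _ := by simp only [sdiv_mul (ha _) (hσ _), Finset.sum_add_distrib]

end SpatialCalculus

section ConvectionDiffusion

variable {d : ℕ}

/-- The parabolic regularity class `C^{2,1}`: space-time fields that are `C²` in space at each time
and `C¹` in time at each point. -/
structure IsC21 (f : (Fin d → ℝ) → ℝ → ℝ) : Prop where
  space : ∀ t, ContDiff ℝ 2 fun x => f x t
  time : ∀ x, ContDiff ℝ 1 fun t => f x t

namespace IsC21

variable {f g : (Fin d → ℝ) → ℝ → ℝ}

theorem const (c : ℝ) : IsC21 fun (_ : Fin d → ℝ) _ => c :=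
  ⟨fun _ => contDiff_const, fun _ => contDiff_const⟩

theorem add (hf : IsC21 f) (hg : IsC21 g) : IsC21 fun x t => f x t + g x t :=
  ⟨fun t => (hf.space t).add (hg.space t), fun x => (hf.time x).add (hg.time x)⟩

theorem sub (hf : IsC21 f) (hg : IsC21 g) : IsC21 fun x t => f x t - g x t :=
  ⟨fun t => (hf.space t).sub (hg.space t), fun x => (hf.time x).sub (hg.time x)⟩

theorem mul (hf : IsC21 f) (hg : IsC21 g) : IsC21 fun x t => f x t * g x t :=
  ⟨fun t => (hf.space t).mul (hg.space t), fun x => (hf.time x).mul (hg.time x)⟩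

theorem div (hf : IsC21 f) (hg : IsC21 g) (hg₀ : ∀ x t, g x t ≠ 0) :
    IsC21 fun x t => f x t / g x t :=
  ⟨fun t => (hf.space t).div (hg.space t) (hg₀ · t),
    fun x => (hf.time x).div (hg.time x) (hg₀ x)⟩

theorem sum {ι : Type*} {s : Finset ι} {F : ι → (Fin d → ℝ) → ℝ → ℝ}
    (hF : ∀ i ∈ s, IsC21 (F i)) : IsC21 fun x t => ∑ i ∈ s, F i x t :=
  ⟨fun t => ContDiff.sum fun i hi => (hF i hi).space t,
    fun x => ContDiff.sum fun i hi => (hF i hi).time x⟩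

theorem sum_sq_div_two {ι : Type*} {s : Finset ι} {a : (Fin d → ℝ) → ℝ → ι → ℝ}
    (ha : ∀ i ∈ s, IsC21 fun x t => a x t i) :
    IsC21 fun x t => (∑ i ∈ s, a x t i ^ 2) / 2 := by
  simp only [sq]
  exact (sum fun i hi => (ha i hi).mul (ha i hi)).div (const 2) fun _ _ => two_ne_zero

theorem mul_sum_sq_div_two {ι : Type*} {s : Finset ι} {a : (Fin d → ℝ) → ℝ → ι → ℝ}
    (hf : IsC21 f) (ha : ∀ i ∈ s, IsC21 fun x t => a x t i) :
    IsC21 fun x t => f x t * (∑ i ∈ s, a x t i ^ 2) / 2 := by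
  simpa only [mul_div_assoc] using hf.mul (sum_sq_div_two ha)

theorem differentiableAt_space (hf : IsC21 f) (x : Fin d → ℝ) (t : ℝ) :
    DifferentiableAt ℝ (fun y => f y t) x :=
  (hf.space t).differentiable two_ne_zero x

theorem differentiableAt_time (hf : IsC21 f) (x : Fin d → ℝ) (t : ℝ) :
    DifferentiableAt ℝ (fun τ => f x τ) t :=
  (hf.time x).differentiable one_ne_zero t

end IsC21

/-- Material derivative `∂ₜf + u·∇f` along the velocity field `u`. -/
noncomputable def materialDeriv (u : (Fin d → ℝ) → ℝ → Fin d → ℝ) (f : (Fin d → ℝ) → ℝ → ℝ)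
    (x : Fin d → ℝ) (t : ℝ) : ℝ :=
  deriv (fun τ => f x τ) t + ∑ j, u x t j * spd (fun y => f y t) j x

/-- The convection-diffusion operator `L f = ∂ₜf + ∇·(f u) − ε Δf`, in conservative form. -/
noncomputable def convDiff (ε : ℝ) (u : (Fin d → ℝ) → ℝ → Fin d → ℝ)
    (f : (Fin d → ℝ) → ℝ → ℝ) (x : Fin d → ℝ) (t : ℝ) : ℝ :=
  deriv (fun τ => f x τ) t + sdiv (fun y j => f y t * u y t j) x - ε * slap (fun y => f y t) x

variable {ε : ℝ} {u : (Fin d → ℝ) → ℝ → Fin d → ℝ} {f g : (Fin d → ℝ) → ℝ → ℝ}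
  {x : Fin d → ℝ} {t : ℝ}

theorem materialDeriv_mul (hf : IsC21 f) (hg : IsC21 g) :
    materialDeriv u (fun y τ => f y τ * g y τ) x t
      = f x t * materialDeriv u g x t + g x t * materialDeriv u f x t := by
  simp only [materialDeriv, mul_add, Finset.mul_sum, mul_left_comm _ (u x t _),
    spd_mul (hf.differentiableAt_space x t) (hg.differentiableAt_space x t),
    deriv_fun_mul (hf.differentiableAt_time x t) (hg.differentiableAt_time x t),
    Finset.sum_add_distrib]
  ring

theorem convDiff_eq_materialDeriv (hf : IsC21 f)
    (hu : ∀ j, DifferentiableAt ℝ (fun y => u y t j) x) :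
    convDiff ε u f x t
      = materialDeriv u f x t + f x t * sdiv (fun y => u y t) x
        - ε * slap (fun y => f y t) x := by
  rw [convDiff, materialDeriv, sdiv_mul (hf.differentiableAt_space x t) hu]
  ring

theorem convDiff_const (c : ℝ) (hu : ∀ j, DifferentiableAt ℝ (fun y => u y t j) x) :
    convDiff ε u (fun _ _ => c) x t = c * sdiv (fun y => u y t) x := by
  simp [convDiff_eq_materialDeriv (IsC21.const c) hu, materialDeriv, spd_const, slap_const]

theorem convDiff_add (hf : IsC21 f) (hg : IsC21 g)
    (hu : ∀ j, DifferentiableAt ℝ (fun y => u y t j) x) :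
    convDiff ε u (fun y τ => f y τ + g y τ) x t = convDiff ε u f x t + convDiff ε u g x t := by
  simp only [convDiff, add_mul,
    deriv_fun_add (hf.differentiableAt_time x t) (hg.differentiableAt_time x t),
    sdiv_add (fun j => (hf.differentiableAt_space x t).fun_mul (hu j))
      (fun j => (hg.differentiableAt_space x t).fun_mul (hu j)),
    slap_add (hf.space t) (hg.space t)]
  ring

theorem convDiff_sum {ι : Type*} {s : Finset ι} {F : ι → (Fin d → ℝ) → ℝ → ℝ}
    (hF : ∀ i ∈ s, IsC21 (F i)) (hu : ∀ j, DifferentiableAt ℝ (fun y => u y t j) x) :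
    convDiff ε u (fun y τ => ∑ i ∈ s, F i y τ) x t = ∑ i ∈ s, convDiff ε u (F i) x t := by
  classical
  induction s using Finset.induction_on with
  | empty => simp [convDiff_const 0 hu]
  | insert i s hi ih =>
    obtain ⟨hFi, hFs⟩ := Finset.forall_mem_insert i s _ |>.mp hF
    simp only [Finset.sum_insert hi, convDiff_add hFi (IsC21.sum hFs) hu, ih hFs]

theorem convDiff_mul (hf : IsC21 f) (hg : IsC21 g)
    (hu : ∀ j, DifferentiableAt ℝ (fun y => u y t j) x) :
    convDiff ε u (fun y τ => f y τ * g y τ) x t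
      = g x t * convDiff ε u f x t
        + f x t * (materialDeriv u g x t - ε * slap (fun y => g y t) x)
        - 2 * ε * ∑ j, spd (fun y => f y t) j x * spd (fun y => g y t) j x := by
  rw [convDiff_eq_materialDeriv (hf.mul hg) hu, convDiff_eq_materialDeriv hf hu,
    materialDeriv_mul hf hg, slap_mul (hf.space t) (hg.space t)]
  ring

theorem convDiff_div_const (c : ℝ) (hf : IsC21 f)
    (hu : ∀ j, DifferentiableAt ℝ (fun y => u y t j) x) :
    convDiff ε u (fun y τ => f y τ / c) x t = convDiff ε u f x t / c := by
  simp [div_eq_mul_inv, convDiff_mul hf (IsC21.const c⁻¹) hu, materialDeriv, spd_const,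
    slap_const, mul_comm]

theorem convDiff_mul_sq (hf : IsC21 f) (hg : IsC21 g)
    (hu : ∀ j, DifferentiableAt ℝ (fun y => u y t j) x) :
    convDiff ε u (fun y τ => f y τ * g y τ ^ 2) x t
      = 2 * g x t * convDiff ε u (fun y τ => f y τ * g y τ) x t - g x t ^ 2 * convDiff ε u f x t
        - 2 * ε * f x t * ∑ j, spd (fun y => g y t) j x ^ 2 := by
  have hgrad : ∑ j, spd (fun y => f y t * g y t) j x * spd (fun y => g y t) j x
      = f x t * ∑ j, spd (fun y => g y t) j x ^ 2
        + g x t * ∑ j, spd (fun y => f y t) j x * spd (fun y => g y t) j x := by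
    simp only [spd_mul (hf.differentiableAt_space x t) (hg.differentiableAt_space x t),
      Finset.mul_sum, ← Finset.sum_add_distrib]
    exact Finset.sum_congr rfl fun j _ => by ring
  simp only [sq (g _ _), ← mul_assoc]
  rw [convDiff_mul (hf.mul hg) hg hu, hgrad]
  linear_combination -g x t * convDiff_mul (ε := ε) hf hg hu

theorem convDiff_mul_sum_sq_div_two {ι : Type*} [Fintype ι] {a : (Fin d → ℝ) → ℝ → ι → ℝ}
    (hf : IsC21 f) (ha : ∀ i, IsC21 fun y τ => a y τ i)
    (hu : ∀ j, DifferentiableAt ℝ (fun y => u y t j) x) :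
    convDiff ε u (fun y τ => f y τ * (∑ i, a y τ i ^ 2) / 2) x t
      = ∑ i, a x t i * convDiff ε u (fun y τ => f y τ * a y τ i) x t
        - (∑ i, a x t i ^ 2) / 2 * convDiff ε u f x t
        - ε * f x t * ∑ i, ∑ j, spd (fun y => a y t i) j x ^ 2 := by
  have hterm (i) : IsC21 fun y τ => f y τ * a y τ i ^ 2 := by
    simpa only [sq] using hf.mul ((ha i).mul (ha i))
  simp only [Finset.mul_sum (Finset.univ : Finset ι)]
  rw [convDiff_div_const 2 (IsC21.sum fun i _ => hterm i) hu, convDiff_sum (fun i _ => hterm i) hu,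
    Finset.sum_div, Finset.sum_div, Finset.sum_mul, ← Finset.sum_sub_distrib,
    ← Finset.sum_sub_distrib]
  refine Finset.sum_congr rfl fun i _ => ?_
  rw [convDiff_mul_sq hf (ha i) hu]
  ring

theorem convDiff_eq_sdiv_of_balance {F : (Fin d → ℝ) → Fin d → ℝ} (hf : IsC21 f)
    (hu : ∀ j, DifferentiableAt ℝ (fun y => u y t j) x)
    (hF : ∀ j, DifferentiableAt ℝ (fun y => F y j) x)
    (h : deriv (fun τ => f x τ) t + sdiv (fun y j => f y t * u y t j - F y j) x
      = ε * slap (fun y => f y t) x) :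
    convDiff ε u f x t = sdiv F x := by
  rw [sdiv_sub (fun j => (hf.differentiableAt_space x t).fun_mul (hu j)) hF] at h
  rw [convDiff]
  linear_combination h

end ConvectionDiffusion

section EnergyBalance

variable {d : ℕ} {ε : ℝ} {u b : (Fin d → ℝ) → ℝ → Fin d → ℝ} {x : Fin d → ℝ} {t : ℝ}

theorem convDiff_internal_energy {ρ w : (Fin d → ℝ) → ℝ → ℝ}
    {σ : (Fin d → ℝ) → Fin d → Fin d → ℝ} (hρ : IsC21 ρ) (hw : IsC21 w)
    (hu : ∀ i, IsC21 fun y τ => u y τ i) (hσ : ∀ i j, DifferentiableAt ℝ (fun y => σ y i j) x)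
    (hmass : convDiff ε u ρ x t = 0)
    (hmom : ∀ i, convDiff ε u (fun y τ => ρ y τ * u y τ i) x t = sdiv (fun y => σ y i) x)
    (hener : convDiff ε u (fun y τ => ρ y τ * (∑ i, u y τ i ^ 2) / 2 + w y τ) x t
      = sdiv (fun y j => ∑ i, u y t i * σ y i j) x) :
    convDiff ε u w x t = ∑ i, ∑ j, σ x i j * spd (fun y => u y t i) j x
      + ε * ρ x t * ∑ i, ∑ j, spd (fun y => u y t i) j x ^ 2 := by
  have du (i) := (hu i).differentiableAt_space x t
  have hkin := hρ.mul_sum_sq_div_two fun i (_ : i ∈ Finset.univ) => hu i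
  rw [convDiff_add hkin hw du, convDiff_mul_sum_sq_div_two hρ hu du, hmass,
    sdiv_sum_mul du hσ] at hener
  simp only [hmom] at hener
  linear_combination hener

theorem sum_maxwellT_mul (B : Fin d → ℝ) (A : Fin d → Fin d → ℝ) :
    ∑ i, ∑ j, maxwellT B i j * A i j
      = ∑ i, B i * ∑ j, B j * A i j - (∑ i, B i ^ 2) / 2 * ∑ i, A i i := by
  simp [maxwellT, sub_mul, Finset.sum_sub_distrib, Finset.mul_sum, mul_assoc]

theorem convDiff_magnetic_energy (hb : ∀ i, IsC21 fun y τ => b y τ i)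
    (hu : ∀ i, DifferentiableAt ℝ (fun y => u y t i) x)
    (hdiv : sdiv (fun y => b y t) x = 0)
    (hind : ∀ i, convDiff ε u (fun y τ => b y τ i) x t = sdiv (fun y j => u y t i * b y t j) x) :
    convDiff ε u (fun y τ => (∑ i, b y τ i ^ 2) / 2) x t
      = ∑ i, ∑ j, maxwellT (b x t) i j * spd (fun y => u y t i) j x
        - ε * ∑ i, ∑ j, spd (fun y => b y t i) j x ^ 2 := by
  have hsq := convDiff_mul_sum_sq_div_two (ε := ε) (IsC21.const 1) hb hu
  simp only [one_mul, mul_one, convDiff_const 1 hu, hind,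
    sdiv_mul (hu _) fun j => (hb j).differentiableAt_space x t, hdiv, mul_zero, zero_add] at hsq
  rw [hsq, sum_maxwellT_mul, sdiv]

/-- The total stress `σ = 𝒯 − p I`, as a function of the values of `p` and `B`. -/
noncomputable def mhdStress (p : ℝ) (B : Fin d → ℝ) (i j : Fin d) : ℝ :=
  maxwellT B i j - if i = j then p else 0

theorem sum_mhdStress_mul (p : ℝ) (B : Fin d → ℝ) (A : Fin d → Fin d → ℝ) :
    ∑ i, ∑ j, mhdStress p B i j * A i j
      = ∑ i, ∑ j, maxwellT B i j * A i j - p * ∑ i, A i i := by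
  simp [mhdStress, sub_mul, Finset.sum_sub_distrib, Finset.mul_sum]

theorem sum_mul_mhdStress (p : ℝ) (B v : Fin d → ℝ) (j : Fin d) :
    ∑ k, v k * mhdStress p B k j = ∑ k, v k * maxwellT B k j - v j * p := by
  simp [mhdStress, mul_sub, Finset.sum_sub_distrib]

theorem differentiableAt_mhdStress {p : (Fin d → ℝ) → ℝ} {B : (Fin d → ℝ) → Fin d → ℝ}
    (hp : DifferentiableAt ℝ p x) (hB : ∀ i, DifferentiableAt ℝ (fun y => B y i) x)
    (i j : Fin d) : DifferentiableAt ℝ (fun y => mhdStress (p y) (B y) i j) x := by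
  unfold mhdStress maxwellT
  split_ifs <;> fun_prop

theorem convDiff_mhd_internal_energy {ρ e p : (Fin d → ℝ) → ℝ → ℝ} (hρ : IsC21 ρ) (he : IsC21 e)
    (hu : ∀ i, IsC21 fun y τ => u y τ i) (hb : ∀ i, IsC21 fun y τ => b y τ i)
    (hp : DifferentiableAt ℝ (fun y => p y t) x) (hdiv : sdiv (fun y => b y t) x = 0)
    (hmass : convDiff ε u ρ x t = 0)
    (hmom : ∀ i, convDiff ε u (fun y τ => ρ y τ * u y τ i) x t
      = sdiv (fun y => mhdStress (p y t) (b y t) i) x)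
    (hener : convDiff ε u (fun y τ => ρ y τ * (∑ i, u y τ i ^ 2) / 2
        + (ρ y τ * e y τ + (∑ i, b y τ i ^ 2) / 2)) x t
      = sdiv (fun y j => ∑ i, u y t i * mhdStress (p y t) (b y t) i j) x)
    (hind : ∀ i, convDiff ε u (fun y τ => b y τ i) x t = sdiv (fun y j => u y t i * b y t j) x) :
    convDiff ε u (fun y τ => ρ y τ * e y τ) x t
      = -p x t * sdiv (fun y => u y t) x
        + ε * ρ x t * ∑ i, ∑ j, spd (fun y => u y t i) j x ^ 2
        + ε * ∑ i, ∑ j, spd (fun y => b y t i) j x ^ 2 := by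
  have du (i) := (hu i).differentiableAt_space x t
  have hmag : IsC21 fun y τ => (∑ i, b y τ i ^ 2) / 2 := IsC21.sum_sq_div_two fun i _ => hb i
  have hint := convDiff_internal_energy hρ ((hρ.mul he).add hmag) hu
    (differentiableAt_mhdStress hp fun i => (hb i).differentiableAt_space x t) hmass hmom hener
  rw [convDiff_add (hρ.mul he) hmag du, convDiff_magnetic_energy hb du hdiv hind,
    sum_mhdStress_mul] at hint
  rw [sdiv]
  linear_combination hint

end EnergyBalance

section EntropyBalance

theorem fderiv_apply_eq_Sd1_add_Sd2 (S : ℝ × ℝ → ℝ) (q : ℝ × ℝ) (a c : ℝ) :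
    fderiv ℝ S q (a, c) = a * Sd1 S q + c * Sd2 S q := by
  have hsplit : ((a, c) : ℝ × ℝ) = a • (1, 0) + c • (0, 1) := by simp
  rw [hsplit, map_add, map_smul, map_smul, Sd1, Sd2, smul_eq_mul, smul_eq_mul]

theorem differentiable_Sd1 {S : ℝ × ℝ → ℝ} (hS : ContDiff ℝ 2 S) : Differentiable ℝ (Sd1 S) :=
  ((hS.fderiv_right (m := 1) (by norm_num)).clm_apply contDiff_const).differentiable one_ne_zero

theorem differentiable_Sd2 {S : ℝ × ℝ → ℝ} (hS : ContDiff ℝ 2 S) : Differentiable ℝ (Sd2 S) :=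
  ((hS.fderiv_right (m := 1) (by norm_num)).clm_apply contDiff_const).differentiable one_ne_zero

/-- The coefficient `e S_e − ρ S_ρ` of `−dρ` in the Gibbs relation
`ρ dS = S_e d(ρ e) − (e S_e − ρ S_ρ) dρ`, as a function of `(ρ, e)`. -/
noncomputable def gibbsCoeff (S : ℝ × ℝ → ℝ) (q : ℝ × ℝ) : ℝ :=
  q.2 * Sd2 S q - q.1 * Sd1 S q

theorem gibbs_relation {V : Type*} [NormedAddCommGroup V] [NormedSpace ℝ V] {S : ℝ × ℝ → ℝ}
    {r e : V → ℝ} {x : V} (hS : DifferentiableAt ℝ S (r x, e x)) (hr : DifferentiableAt ℝ r x)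
    (he : DifferentiableAt ℝ e x) (v : V) :
    r x * fderiv ℝ (fun y => S (r y, e y)) x v
      = Sd2 S (r x, e x) * fderiv ℝ (fun y => r y * e y) x v
        - gibbsCoeff S (r x, e x) * fderiv ℝ r x v := by
  have hchain : fderiv ℝ (fun y => S (r y, e y)) x v
      = fderiv ℝ r x v * Sd1 S (r x, e x) + fderiv ℝ e x v * Sd2 S (r x, e x) := by
    rw [← fderiv_apply_eq_Sd1_add_Sd2,
      fderiv_fun_comp (f := fun y => (r y, e y)) x hS (hr.prodMk he), hr.fderiv_prodMk he]
    rfl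
  rw [hchain, fderiv_fun_mul hr he, gibbsCoeff]
  simp only [add_apply, smul_apply, smul_eq_mul]
  ring

variable {d : ℕ} {S : ℝ × ℝ → ℝ} {ρ e : (Fin d → ℝ) → ℝ → ℝ} {x : Fin d → ℝ} {t : ℝ}

theorem mul_materialDeriv_entropy {u : (Fin d → ℝ) → ℝ → Fin d → ℝ}
    (hS : DifferentiableAt ℝ S (ρ x t, e x t)) (hρ : IsC21 ρ) (he : IsC21 e) :
    ρ x t * materialDeriv u (fun y τ => S (ρ y τ, e y τ)) x t
      = Sd2 S (ρ x t, e x t) * materialDeriv u (fun y τ => ρ y τ * e y τ) x t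
        - gibbsCoeff S (ρ x t, e x t) * materialDeriv u ρ x t := by
  have hspace (j) : ρ x t * spd (fun y => S (ρ y t, e y t)) j x
      = Sd2 S (ρ x t, e x t) * spd (fun y => ρ y t * e y t) j x
        - gibbsCoeff S (ρ x t, e x t) * spd (fun y => ρ y t) j x :=
    gibbs_relation (r := fun y => ρ y t) hS (hρ.differentiableAt_space x t)
      (he.differentiableAt_space x t) _
  have htime : ρ x t * deriv (fun τ => S (ρ x τ, e x τ)) t
      = Sd2 S (ρ x t, e x t) * deriv (fun τ => ρ x τ * e x τ) t
        - gibbsCoeff S (ρ x t, e x t) * deriv (fun τ => ρ x τ) t :=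
    gibbs_relation hS (hρ.differentiableAt_time x t) (he.differentiableAt_time x t) 1
  simp only [materialDeriv, mul_add, Finset.mul_sum, mul_left_comm _ (u x t _), hspace, htime,
    mul_sub, Finset.sum_sub_distrib]
  ring

theorem sum_spd_mul_spd_entropy {r e : (Fin d → ℝ) → ℝ} (hS : ContDiff ℝ 2 S)
    (hr : ContDiff ℝ 2 r) (he : ContDiff ℝ 2 e) (x : Fin d → ℝ) :
    ∑ j, spd (fun y => r y * spd (fun z => S (r z, e z)) j y) j x
      = Sd2 S (r x, e x) * slap (fun y => r y * e y) x
        + ∑ j, spd (fun y => r y * e y) j x * spd (fun y => Sd2 S (r y, e y)) j x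
        - (gibbsCoeff S (r x, e x) * slap r x
          + ∑ j, spd r j x * spd (fun y => gibbsCoeff S (r y, e y)) j x) := by
  have hr' := hr.differentiable two_ne_zero
  have he' := he.differentiable two_ne_zero
  have hSd1 : Differentiable ℝ fun y => Sd1 S (r y, e y) :=
    (differentiable_Sd1 hS).comp (hr'.prodMk he')
  have hSd2 : Differentiable ℝ fun y => Sd2 S (r y, e y) :=
    (differentiable_Sd2 hS).comp (hr'.prodMk he')
  have hcoeff : Differentiable ℝ fun y => gibbsCoeff S (r y, e y) :=
    (he'.fun_mul hSd2).fun_sub (hr'.fun_mul hSd1)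
  have hre : ContDiff ℝ 2 fun y => r y * e y := hr.mul he
  have hgibbs (j y) : r y * spd (fun z => S (r z, e z)) j y
      = Sd2 S (r y, e y) * spd (fun z => r z * e z) j y - gibbsCoeff S (r y, e y) * spd r j y :=
    gibbs_relation (hS.differentiable two_ne_zero _) (hr' y) (he' y) _
  rw [← sum_spd_mul_spd (hSd2 x) hre, ← sum_spd_mul_spd (hcoeff x) hr,
    ← Finset.sum_sub_distrib]
  refine Finset.sum_congr rfl fun j _ => ?_
  simp only [hgibbs]
  exact spd_sub ((hSd2 x).fun_mul (differentiable_spd hre j x))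
    ((hcoeff x).fun_mul (differentiable_spd hr j x)) j

theorem entropy_production_identity {ε : ℝ} {u : (Fin d → ℝ) → ℝ → Fin d → ℝ} (hS : ContDiff ℝ 2 S)
    (hρ : IsC21 ρ) (he : IsC21 e) (hu : ∀ j, DifferentiableAt ℝ (fun y => u y t j) x) :
    ρ x t * materialDeriv u (fun y τ => S (ρ y τ, e y τ)) x t
        - (∑ j, spd (fun y => ρ y t * ε * spd (fun z => S (ρ z t, e z t)) j y) j x)
        - (∑ j, (ε * spd (fun y => ρ y t) j x)
            * spd (fun y => gibbsCoeff S (ρ y t, e y t)) j x)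
        + (∑ j, (ε * spd (fun y => ρ y t * e y t) j x)
            * spd (fun y => Sd2 S (ρ y t, e y t)) j x)
      = Sd2 S (ρ x t, e x t) * convDiff ε u (fun y τ => ρ y τ * e y τ) x t
        - gibbsCoeff S (ρ x t, e x t) * convDiff ε u ρ x t
        - ρ x t ^ 2 * Sd1 S (ρ x t, e x t) * sdiv (fun y => u y t) x := by
  have hflux : ∑ j, spd (fun y => ρ y t * ε * spd (fun z => S (ρ z t, e z t)) j y) j x
      = ε * ∑ j, spd (fun y => ρ y t * spd (fun z => S (ρ z t, e z t)) j y) j x := by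
    simp only [mul_comm _ ε, mul_assoc, spd_const_mul, Finset.mul_sum]
  rw [mul_materialDeriv_entropy (hS.differentiable two_ne_zero _) hρ he, hflux,
    sum_spd_mul_spd_entropy hS (hρ.space t) (he.space t),
    convDiff_eq_materialDeriv (hρ.mul he) hu, convDiff_eq_materialDeriv hρ hu]
  simp only [mul_assoc ε, ← Finset.mul_sum]
  simp only [gibbsCoeff]
  ring

theorem entropy_balance {ε : ℝ} {p : (Fin d → ℝ) → ℝ → ℝ} {u b : (Fin d → ℝ) → ℝ → Fin d → ℝ}
    (hS : ContDiff ℝ 2 S) (hρ : IsC21 ρ) (he : IsC21 e)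
    (hu : ∀ j, DifferentiableAt ℝ (fun y => u y t j) x)
    (heos : p x t * Sd2 S (ρ x t, e x t) + ρ x t ^ 2 * Sd1 S (ρ x t, e x t) = 0)
    (hmass : convDiff ε u ρ x t = 0)
    (hint : convDiff ε u (fun y τ => ρ y τ * e y τ) x t
      = -p x t * sdiv (fun y => u y t) x
        + ε * ρ x t * ∑ i, ∑ j, spd (fun y => u y t i) j x ^ 2
        + ε * ∑ i, ∑ j, spd (fun y => b y t i) j x ^ 2) :
    ρ x t * materialDeriv u (fun y τ => S (ρ y τ, e y τ)) x t
        - (∑ j, spd (fun y => ρ y t * ε * spd (fun z => S (ρ z t, e z t)) j y) j x)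
        - (∑ i, (ε * spd (fun y => ρ y t) i x)
            * spd (fun y => gibbsCoeff S (ρ y t, e y t)) i x)
        + (∑ i, (ε * spd (fun y => ρ y t * e y t) i x)
            * spd (fun y => Sd2 S (ρ y t, e y t)) i x)
        - ε * ρ x t * Sd2 S (ρ x t, e x t) * (∑ i, ∑ j, spd (fun y => u y t i) j x ^ 2)
        - ε * Sd2 S (ρ x t, e x t) * (∑ i, ∑ j, spd (fun y => b y t i) j x ^ 2) = 0 := by
  linear_combination entropy_production_identity (ε := ε) hS hρ he hu + Sd2 S (ρ x t, e x t) * hint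
    - gibbsCoeff S (ρ x t, e x t) * hmass - sdiv (fun y => u y t) x * heos

end EntropyBalance

section ConservativeVariables

variable {d : ℕ} {ε : ℝ} {ρ E p : (Fin d → ℝ) → ℝ → ℝ} {m u B : (Fin d → ℝ) → ℝ → Fin d → ℝ}
  {x : Fin d → ℝ} {t : ℝ}

/-- The velocity field `u = m / ρ`. -/
noncomputable def velocity (ρ : (Fin d → ℝ) → ℝ → ℝ) (m : (Fin d → ℝ) → ℝ → Fin d → ℝ)
    (x : Fin d → ℝ) (t : ℝ) (i : Fin d) : ℝ :=
  m x t i / ρ x t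

theorem mul_velocity (hρ₀ : ρ x t ≠ 0) (i : Fin d) : ρ x t * velocity ρ m x t i = m x t i :=
  mul_div_cancel₀ _ hρ₀

theorem isC21_velocity (hρ : IsC21 ρ) (hm : ∀ i, IsC21 fun y τ => m y τ i)
    (hρ₀ : ∀ x t, ρ x t ≠ 0) (i : Fin d) : IsC21 fun y τ => velocity ρ m y τ i :=
  (hm i).div hρ hρ₀

theorem isC21_specE (hρ : IsC21 ρ) (hE : IsC21 E) (hm : ∀ i, IsC21 fun y τ => m y τ i)
    (hB : ∀ i, IsC21 fun y τ => B y τ i) (hρ₀ : ∀ x t, ρ x t ≠ 0) : IsC21 (specE ρ E m B) :=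
  ((hE.sub (hρ.mul_sum_sq_div_two fun i _ => isC21_velocity hρ hm hρ₀ i)).sub
    (IsC21.sum_sq_div_two fun i _ => hB i)).div hρ hρ₀

theorem kinetic_add_internal_add_magnetic_energy (hρ₀ : ρ x t ≠ 0) :
    ρ x t * (∑ i, velocity ρ m x t i ^ 2) / 2
      + (ρ x t * specE ρ E m B x t + (∑ i, B x t i ^ 2) / 2) = E x t := by
  simp only [specE, mul_div_cancel₀ _ hρ₀, velocity]
  ring

theorem convDiff_momentum_eq_sdiv_mhdStress {i : Fin d} (hmi : IsC21 fun y τ => m y τ i)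
    (hu : ∀ j, DifferentiableAt ℝ (fun y => u y t j) x)
    (hp : DifferentiableAt ℝ (fun y => p y t) x)
    (hB : ∀ j, DifferentiableAt ℝ (fun y => B y t j) x)
    (hmom : deriv (fun τ => m x τ i) t
        + sdiv (fun y j => m y t i * u y t j + (if i = j then p y t else 0)
            - maxwellT (B y t) i j) x
      = ε * slap (fun y => m y t i) x) :
    convDiff ε u (fun y τ => m y τ i) x t = sdiv (fun y => mhdStress (p y t) (B y t) i) x :=
  convDiff_eq_sdiv_of_balance hmi hu (differentiableAt_mhdStress hp hB i)
    (by simpa only [mhdStress, sub_sub_eq_add_sub] using hmom)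

theorem convDiff_energy_eq_sdiv_mhdStress (hE : IsC21 E)
    (hu : ∀ j, DifferentiableAt ℝ (fun y => u y t j) x)
    (hp : DifferentiableAt ℝ (fun y => p y t) x)
    (hB : ∀ j, DifferentiableAt ℝ (fun y => B y t j) x)
    (hener : deriv (fun τ => E x τ) t
        + sdiv (fun y j => u y t j * (E y t + p y t) - ∑ k, u y t k * maxwellT (B y t) k j) x
      = ε * slap (fun y => E y t) x) :
    convDiff ε u E x t = sdiv (fun y j => ∑ k, u y t k * mhdStress (p y t) (B y t) k j) x := by
  refine convDiff_eq_sdiv_of_balance hE hu (fun j => DifferentiableAt.fun_sum fun k _ =>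
    (hu k).fun_mul (differentiableAt_mhdStress hp hB k j)) ?_
  simpa only [sum_mul_mhdStress, sub_sub_eq_add_sub, mul_comm (E _ _), ← mul_add] using hener

theorem convDiff_magnetic_eq_sdiv {i : Fin d} (hB : ∀ j, IsC21 fun y τ => B y τ j)
    (hu : ∀ j, DifferentiableAt ℝ (fun y => u y t j) x)
    (hind : deriv (fun τ => B x τ i) t
        + sdiv (fun y j => u y t j * B y t i - B y t j * u y t i) x
      = ε * slap (fun y => B y t i) x) :
    convDiff ε u (fun y τ => B y τ i) x t = sdiv (fun y j => u y t i * B y t j) x :=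
  convDiff_eq_sdiv_of_balance (hB i) hu
    (fun j => (hu i).fun_mul ((hB j).differentiableAt_space x t))
    (by simpa only [mul_comm (u _ _ _)] using hind)

end ConservativeVariables

/-- for smooth positive-density solutions of the monolithic-regularized ideal
MHD system with `∇·B = 0` and equation of state `p S_e + ρ² S_ρ = 0`, the entropy
field `s = S(ρ,e)` satisfies pointwise
`ρ(∂ₜs + u·∇s) − ∇·(ρε∇s) − ε∇ρ·∇[(e S_e − ρ S_ρ)∘(ρ,e)] + ε∇(ρe)·∇[S_e∘(ρ,e)]
  − ερ S_e |∇u|² − ε S_e |∇B|² = 0`. -/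
theorem stmt_6 {d : ℕ} (hd : 1 ≤ d) (ε : ℝ) (hε : 0 < ε)
    (ρ E p : (Fin d → ℝ) → ℝ → ℝ) (m B : (Fin d → ℝ) → ℝ → Fin d → ℝ)
    (S : ℝ × ℝ → ℝ) (hS : ContDiff ℝ 2 S)
    (hρpos : ∀ x t, 0 < ρ x t)
    (hρx : ∀ t, ContDiff ℝ 2 fun x => ρ x t) (hρt : ∀ x, ContDiff ℝ 1 fun t => ρ x t)
    (hmx : ∀ t i, ContDiff ℝ 2 fun x => m x t i) (hmt : ∀ x i, ContDiff ℝ 1 fun t => m x t i)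
    (hEx : ∀ t, ContDiff ℝ 2 fun x => E x t) (hEt : ∀ x, ContDiff ℝ 1 fun t => E x t)
    (hBx : ∀ t i, ContDiff ℝ 2 fun x => B x t i) (hBt : ∀ x i, ContDiff ℝ 1 fun t => B x t i)
    (hpx : ∀ t, ContDiff ℝ 1 fun x => p x t)
    (heos : ∀ (x : Fin d → ℝ) (t : ℝ), 0 < t →
      p x t * Sd2 S (ρ x t, specE ρ E m B x t)
        + (ρ x t) ^ 2 * Sd1 S (ρ x t, specE ρ E m B x t) = 0)
    (hdivB : ∀ (x : Fin d → ℝ) (t : ℝ), 0 < t → (∑ j, spd (fun y => B y t j) j x) = 0)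
    (hmass : ∀ (x : Fin d → ℝ) (t : ℝ), 0 < t →
      deriv (fun τ => ρ x τ) t + (∑ j, spd (fun y => m y t j) j x)
        = ε * slap (fun y => ρ y t) x)
    (hmom : ∀ (x : Fin d → ℝ) (t : ℝ), 0 < t → ∀ i,
      deriv (fun τ => m x τ i) t
        + (∑ j, spd (fun y => m y t i * (m y t j / ρ y t)
            + (if i = j then p y t else 0) - maxwellT (B y t) i j) j x)
        = ε * slap (fun y => m y t i) x)
    (hener : ∀ (x : Fin d → ℝ) (t : ℝ), 0 < t →
      deriv (fun τ => E x τ) t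
        + (∑ j, spd (fun y => (m y t j / ρ y t) * (E y t + p y t)
            - ∑ k, (m y t k / ρ y t) * maxwellT (B y t) k j) j x)
        = ε * slap (fun y => E y t) x)
    (hind : ∀ (x : Fin d → ℝ) (t : ℝ), 0 < t → ∀ i,
      deriv (fun τ => B x τ i) t
        + (∑ j, spd (fun y => (m y t j / ρ y t) * B y t i - B y t j * (m y t i / ρ y t)) j x)
        = ε * slap (fun y => B y t i) x) :
    ∀ (x : Fin d → ℝ) (t : ℝ), 0 < t →
      ρ x t * (deriv (fun τ => S (ρ x τ, specE ρ E m B x τ)) t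
          + ∑ i, (m x t i / ρ x t) * spd (fun y => S (ρ y t, specE ρ E m B y t)) i x)
        - (∑ j, spd (fun y => ρ y t * ε * spd (fun z => S (ρ z t, specE ρ E m B z t)) j y) j x)
        - (∑ i, (ε * spd (fun y => ρ y t) i x)
            * spd (fun y => specE ρ E m B y t * Sd2 S (ρ y t, specE ρ E m B y t)
                - ρ y t * Sd1 S (ρ y t, specE ρ E m B y t)) i x)
        + (∑ i, (ε * spd (fun y => ρ y t * specE ρ E m B y t) i x)
            * spd (fun y => Sd2 S (ρ y t, specE ρ E m B y t)) i x)
        - ε * ρ x t * Sd2 S (ρ x t, specE ρ E m B x t)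
            * (∑ i, ∑ j, (spd (fun y => m y t i / ρ y t) j x) ^ 2)
        - ε * Sd2 S (ρ x t, specE ρ E m B x t)
            * (∑ i, ∑ j, (spd (fun y => B y t i) j x) ^ 2) = 0 := by
  intro x t ht
  have hρ₀ (y τ) : ρ y τ ≠ 0 := (hρpos y τ).ne'
  have hρ : IsC21 ρ := ⟨hρx, hρt⟩
  have hE : IsC21 E := ⟨hEx, hEt⟩
  have hm (i) : IsC21 fun y τ => m y τ i := ⟨(hmx · i), (hmt · i)⟩
  have hB (i) : IsC21 fun y τ => B y τ i := ⟨(hBx · i), (hBt · i)⟩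
  have hu := isC21_velocity hρ hm hρ₀
  have he : IsC21 (specE ρ E m B) := isC21_specE hρ hE hm hB hρ₀
  have dp : DifferentiableAt ℝ (fun y => p y t) x := (hpx t).differentiable one_ne_zero x
  have dB (i) := (hB i).differentiableAt_space x t
  have du (i) := (hu i).differentiableAt_space x t
  have hmass₀ : convDiff ε (velocity ρ m) ρ x t = 0 := by
    simpa only [convDiff, sdiv, mul_velocity (hρ₀ _ _), sub_eq_zero] using hmass x t ht
  refine entropy_balance (u := velocity ρ m) (b := B) hS hρ he du (heos x t ht) hmass₀
    (convDiff_mhd_internal_energy hρ he hu hB dp (hdivB x t ht) hmass₀ (fun i => ?_) ?_ fun i => ?_)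
  · simpa only [mul_velocity (hρ₀ _ _)] using
      convDiff_momentum_eq_sdiv_mhdStress (hm i) du dp dB (hmom x t ht i)
  · simpa only [kinetic_add_internal_add_magnetic_energy (hρ₀ _ _)] using
      convDiff_energy_eq_sdiv_mhdStress hE du dp dB (hener x t ht)
  · exact convDiff_magnetic_eq_sdiv hB du (hind x t ht i)
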